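/- Resolution of identity: for all polynomial functions Ψ₁, Ψ₂ : ℂⁿ → ℂ of total degree at most m, c(m) ∫_{ℂⁿ} ⟨Ψ₁, ψ_μ⟩ₘ · ⟨ψ_μ, Ψ₂⟩ₘ · (1+‖μ‖²)^{-(m+n+1)} dλ(μ) = ⟨Ψ₁, Ψ₂⟩ₘ. In particular, c(m) ∫_{ℂⁿ} ⟨ψ_ν, ψ_μ⟩ₘ ⟨ψ_μ, ψ_ν⟩ₘ (1+‖μ‖²)^{-(m+n+1)} dλ(μ) = ⟨ψ_ν, ψ_ν⟩ₘ for every ν ∈ ℂⁿ. -/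

import Mathlib

open MeasureTheory

/-- The normalizing constant `c(m)`, with
`c(m)⁻¹ = ∫_{ℂⁿ} (1+‖ν‖²)^{-(m+n+1)} dλ(ν)`. -/
noncomputable def cconst (n m : ℕ) : ℝ :=
  (∫ ν : Fin n → ℂ, ((1 + ∑ j, Complex.normSq (ν j)) ^ (m + n + 1))⁻¹)⁻¹

/-- The coherent state `ψ_μ(ν) = (1 + ⟨μ,ν⟩)^m` with `⟨μ,ν⟩ = Σⱼ conj(μⱼ)νⱼ`. -/
noncomputable def psiCS (n m : ℕ) (μ ν : Fin n → ℂ) : ℂ :=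
  (1 + ∑ j, (starRingEnd ℂ) (μ j) * ν j) ^ m

/-- The weighted inner product
`⟨f,g⟩ₘ = c(m) ∫_{ℂⁿ} conj(f(ν)) g(ν) (1+‖ν‖²)^{-(m+n+1)} dλ(ν)`. -/
noncomputable def wInner (n m : ℕ) (f g : (Fin n → ℂ) → ℂ) : ℂ :=
  ((cconst n m : ℝ) : ℂ) *
    ∫ ν : Fin n → ℂ, (starRingEnd ℂ) (f ν) * g ν *
      ((((1 + ∑ j, Complex.normSq (ν j)) ^ (m + n + 1) : ℝ) : ℂ))⁻¹

/-!
Distinct monomials are orthogonal because the weight is invariant under the torus acting on the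
coordinates. For `|α| ≤ m`, writing `(1 + ‖ν‖²)⁻ᴺ` as a Gamma integral in `t` turns the norm of
`ν ^ α` into a product of one-variable Gaussian moments, so that `⟨ν ^ α, ν ^ α⟩ₘ` is the inverse
of `m! / (α! (m - |α|)!)`. This number is also the coefficient of `(conj μ) ^ α ν ^ α` in `ψ_μ(ν)`,
hence `⟨ψ_μ, Ψ⟩ₘ = Ψ(μ)` for every polynomial `Ψ` of degree at most `m`: the coherent states
reproduce. The left-hand side of the resolution of the identity is then `⟨Ψ₁, Ψ₂⟩ₘ` by definition.
-/

open scoped ComplexConjugate Nat Real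

section GaussianIntegrals

variable {ι : Type*} [Fintype ι]

lemma integral_pow_mul_exp_neg_mul_Ioi (N : ℕ) {r : ℝ} (hr : 0 < r) :
    ∫ t in Set.Ioi (0 : ℝ), t ^ N * Real.exp (-(r * t)) = N ! / r ^ (N + 1) := by
  have h := Real.integral_rpow_mul_exp_neg_mul_Ioi N.cast_add_one_pos hr
  rw [add_sub_cancel_right, Real.Gamma_nat_eq_factorial, one_div, Real.inv_rpow hr.le] at h
  norm_cast at h
  rw [h, div_eq_inv_mul]

lemma integrableOn_pow_mul_exp_neg_mul_Ioi (N : ℕ) {r : ℝ} (hr : 0 < r) :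
    IntegrableOn (fun t : ℝ => t ^ N * Real.exp (-(r * t))) (Set.Ioi 0) :=
  .of_integral_ne_zero (by rw [integral_pow_mul_exp_neg_mul_Ioi N hr]; positivity)

lemma integral_normSq_pow_mul_exp_neg (a : ℕ) {t : ℝ} (ht : 0 < t) :
    ∫ z : ℂ, Complex.normSq z ^ a * Real.exp (-(t * Complex.normSq z)) =
      π * a ! / t ^ (a + 1) := by
  have h := Complex.integral_rpow_mul_exp_neg_mul_rpow (p := 2) (q := (2 * a : ℕ)) one_le_two
    ((neg_neg_of_pos two_pos).trans_le (Nat.cast_nonneg _)) ht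
  have hexp : (((2 * a : ℕ) : ℝ) + 2) / 2 = a + 1 := by push_cast; ring
  rw [neg_div, hexp, Real.Gamma_nat_eq_factorial, Real.rpow_neg ht.le,
    mul_div_cancel_left₀ _ two_ne_zero] at h
  norm_cast at h
  simp only [Complex.normSq_eq_norm_sq, ← pow_mul, ← neg_mul]
  rw [h]
  ring

lemma integral_prod_normSq_pow_mul_exp_neg (α : ι → ℕ) {t : ℝ} (ht : 0 < t) :
    ∫ z : ι → ℂ, (∏ j, Complex.normSq (z j) ^ α j) *
        Real.exp (-(t * ∑ j, Complex.normSq (z j))) =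
      π ^ Fintype.card ι * (∏ j, ((α j)! : ℝ)) / t ^ (∑ j, α j + Fintype.card ι) := by
  simp only [Finset.mul_sum, ← Finset.sum_neg_distrib, Real.exp_sum, ← Finset.prod_mul_distrib]
  rw [integral_fintype_prod_volume_eq_prod
    (f := fun j z => Complex.normSq z ^ α j * Real.exp (-(t * Complex.normSq z)))]
  simp only [integral_normSq_pow_mul_exp_neg _ ht, Finset.prod_div_distrib,
    Finset.prod_mul_distrib, Finset.prod_pow_eq_pow_sum, Finset.sum_add_distrib,
    Finset.prod_const, Finset.sum_const, Finset.card_univ, smul_eq_mul, mul_one]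

end GaussianIntegrals

section FubiniStudyWeight

variable {ι : Type*} [Fintype ι]

/-- The weight `(1 + ‖z‖²)⁻ᴺ` of the Fubini–Study type measures on the affine chart `ℂ^ι`, where
`‖z‖` is the Euclidean norm and not the sup norm that `ι → ℂ` carries. -/
noncomputable def fubiniStudyWeight (N : ℕ) (z : ι → ℂ) : ℝ :=
  ((1 + ∑ j, Complex.normSq (z j)) ^ N)⁻¹

lemma one_le_one_add_sum_normSq (z : ι → ℂ) : 1 ≤ 1 + ∑ j, Complex.normSq (z j) :=
  le_add_of_nonneg_right (Finset.sum_nonneg fun _ _ => Complex.normSq_nonneg _)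

lemma one_add_sum_normSq_pos (z : ι → ℂ) : 0 < 1 + ∑ j, Complex.normSq (z j) :=
  one_pos.trans_le (one_le_one_add_sum_normSq z)

lemma fubiniStudyWeight_nonneg (N : ℕ) (z : ι → ℂ) : 0 ≤ fubiniStudyWeight N z :=
  inv_nonneg.mpr (pow_nonneg (one_add_sum_normSq_pos z).le N)

lemma continuous_fubiniStudyWeight (N : ℕ) :
    Continuous (fubiniStudyWeight N : (ι → ℂ) → ℝ) := by
  have := Complex.continuous_normSq
  exact Continuous.inv₀ (by fun_prop) fun z => (pow_pos (one_add_sum_normSq_pos z) N).ne'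

lemma norm_sq_le_sum_normSq (z : ι → ℂ) : ‖z‖ ^ 2 ≤ ∑ j, Complex.normSq (z j) := by
  refine (Real.le_sqrt (norm_nonneg z) (Finset.sum_nonneg fun _ _ => Complex.normSq_nonneg _)).mp
    ((pi_norm_le_iff_of_nonneg (Real.sqrt_nonneg _)).mpr fun j => Real.le_sqrt_of_sq_le ?_)
  rw [← Complex.normSq_eq_norm_sq]
  exact Finset.single_le_sum (fun i _ => Complex.normSq_nonneg (z i)) (Finset.mem_univ j)

lemma integrable_fubiniStudyWeight {N : ℕ} (hN : Fintype.card ι < N) :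
    Integrable (fubiniStudyWeight N : (ι → ℂ) → ℝ) := by
  have hdim : (Module.finrank ℝ (ι → ℂ) : ℝ) < (2 * N : ℕ) := by
    rw [Module.finrank_pi_fintype]
    simp only [Complex.finrank_real_complex, Finset.sum_const, Finset.card_univ, smul_eq_mul]
    exact_mod_cast (by omega : Fintype.card ι * 2 < 2 * N)
  refine (integrable_rpow_neg_one_add_norm_sq (μ := volume) hdim).mono'
    (continuous_fubiniStudyWeight N).aestronglyMeasurable (.of_forall fun z => ?_)
  have hsup := norm_sq_le_sum_normSq z
  have hexp : -((2 * N : ℕ) : ℝ) / 2 = -(N : ℝ) := by push_cast; ring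
  rw [Real.norm_of_nonneg (fubiniStudyWeight_nonneg N z), hexp,
    Real.rpow_neg (by positivity), Real.rpow_natCast]
  unfold fubiniStudyWeight
  gcongr

lemma integrable_fubiniStudyWeight_smul {E : Type*} [NormedAddCommGroup E] [NormedSpace ℝ E]
    {N k : ℕ} {f : (ι → ℂ) → E} (hf : AEStronglyMeasurable f)
    (hbound : ∀ z, ‖f z‖ ≤ (1 + ∑ j, Complex.normSq (z j)) ^ k) (hN : k + Fintype.card ι < N) :
    Integrable fun z => fubiniStudyWeight N z • f z := by
  refine (integrable_fubiniStudyWeight (ι := ι) (N := N - k) (by omega)).mono'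
    ((continuous_fubiniStudyWeight N).aestronglyMeasurable.smul hf) (.of_forall fun z => ?_)
  have hpos := one_add_sum_normSq_pos z
  calc ‖fubiniStudyWeight N z • f z‖
      ≤ fubiniStudyWeight N z * (1 + ∑ j, Complex.normSq (z j)) ^ k := by
        rw [norm_smul, Real.norm_of_nonneg (fubiniStudyWeight_nonneg N z)]
        exact mul_le_mul_of_nonneg_left (hbound z) (fubiniStudyWeight_nonneg N z)
    _ = fubiniStudyWeight (N - k) z := by
        rw [fubiniStudyWeight, fubiniStudyWeight, pow_sub₀ _ hpos.ne' (by omega), mul_inv, inv_inv]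

lemma prod_normSq_pow_nonneg (z : ι → ℂ) (α : ι → ℕ) : 0 ≤ ∏ j, Complex.normSq (z j) ^ α j :=
  Finset.prod_nonneg fun _ _ => pow_nonneg (Complex.normSq_nonneg _) _

lemma prod_normSq_pow_le (z : ι → ℂ) {α : ι → ℕ} {k : ℕ} (hα : ∑ j, α j ≤ k) :
    ∏ j, Complex.normSq (z j) ^ α j ≤ (1 + ∑ j, Complex.normSq (z j)) ^ k :=
  calc ∏ j, Complex.normSq (z j) ^ α j
      ≤ ∏ j, (1 + ∑ i, Complex.normSq (z i)) ^ α j := by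
        refine Finset.prod_le_prod (fun j _ => pow_nonneg (Complex.normSq_nonneg _) _) fun j hj =>
          pow_le_pow_left₀ (Complex.normSq_nonneg _) ?_ _
        have := Finset.single_le_sum (fun i _ => Complex.normSq_nonneg (z i)) hj
        linarith
    _ = (1 + ∑ j, Complex.normSq (z j)) ^ ∑ j, α j := Finset.prod_pow_eq_pow_sum ..
    _ ≤ (1 + ∑ j, Complex.normSq (z j)) ^ k :=
        pow_le_pow_right₀ (one_le_one_add_sum_normSq z) hα

lemma norm_conj_monomial_mul_monomial_le (z : ι → ℂ) {α β : ι → ℕ} {k : ℕ}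
    (hα : ∑ j, α j ≤ k) (hβ : ∑ j, β j ≤ k) :
    ‖conj (∏ j, z j ^ α j) * ∏ j, z j ^ β j‖ ≤ (1 + ∑ j, Complex.normSq (z j)) ^ k := by
  have hsq {γ : ι → ℕ} (hγ : ∑ j, γ j ≤ k) :
      ‖∏ j, z j ^ γ j‖ ^ 2 ≤ (1 + ∑ j, Complex.normSq (z j)) ^ k := by
    rw [← Complex.normSq_eq_norm_sq, map_prod]
    simpa only [map_pow] using prod_normSq_pow_le z hγ
  rw [norm_mul, RCLike.norm_conj]
  linarith [two_mul_le_add_sq ‖∏ j, z j ^ α j‖ ‖∏ j, z j ^ β j‖, hsq hα, hsq hβ]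

lemma integrable_fubiniStudyWeight_smul_conj_monomial_mul_monomial {N k : ℕ}
    (hN : k + Fintype.card ι < N) {α β : ι → ℕ} (hα : ∑ j, α j ≤ k) (hβ : ∑ j, β j ≤ k) :
    Integrable fun z : ι → ℂ =>
      fubiniStudyWeight N z • (conj (∏ j, z j ^ α j) * ∏ j, z j ^ β j) :=
  integrable_fubiniStudyWeight_smul (by fun_prop)
    (fun z => norm_conj_monomial_mul_monomial_le z hα hβ) hN

end FubiniStudyWeight

section DiagonalMoments

variable {ι : Type*} [Fintype ι]

lemma integral_pow_mul_exp_neg_one_add_sum_normSq (N : ℕ) (z : ι → ℂ) :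
    ∫ t in Set.Ioi (0 : ℝ), t ^ N * Real.exp (-((1 + ∑ j, Complex.normSq (z j)) * t)) =
      N ! * fubiniStudyWeight (N + 1) z :=
  integral_pow_mul_exp_neg_mul_Ioi N (one_add_sum_normSq_pos z)

lemma integrable_prod_normSq_pow_mul_pow_mul_exp_neg {N : ℕ} {α : ι → ℕ}
    (hα : ∑ j, α j + Fintype.card ι ≤ N) :
    Integrable (fun p : (ι → ℂ) × ℝ => (∏ j, Complex.normSq (p.1 j) ^ α j) *
      (p.2 ^ N * Real.exp (-((1 + ∑ j, Complex.normSq (p.1 j)) * p.2))))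
      (volume.prod (volume.restrict (Set.Ioi 0))) := by
  have := Complex.continuous_normSq
  refine (integrable_prod_iff (Continuous.aestronglyMeasurable (by fun_prop))).mpr
    ⟨.of_forall fun z =>
      (integrableOn_pow_mul_exp_neg_mul_Ioi N (one_add_sum_normSq_pos z)).const_mul
        (∏ j, Complex.normSq (z j) ^ α j), ?_⟩
  have hweight : Integrable fun z : ι → ℂ =>
      fubiniStudyWeight (N + 1) z • ∏ j, Complex.normSq (z j) ^ α j :=
    integrable_fubiniStudyWeight_smul (Continuous.aestronglyMeasurable (by fun_prop))
      (fun z => by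
        rw [Real.norm_of_nonneg (prod_normSq_pow_nonneg z α)]
        exact prod_normSq_pow_le z le_rfl) (Nat.lt_succ_of_le hα)
  refine (hweight.const_mul (N ! : ℝ)).congr (.of_forall fun z => ?_)
  symm
  calc ∫ t in Set.Ioi (0 : ℝ), ‖(∏ j, Complex.normSq (z j) ^ α j) *
        (t ^ N * Real.exp (-((1 + ∑ j, Complex.normSq (z j)) * t)))‖
      = ∫ t in Set.Ioi (0 : ℝ), (∏ j, Complex.normSq (z j) ^ α j) *
          (t ^ N * Real.exp (-((1 + ∑ j, Complex.normSq (z j)) * t))) := by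
        refine setIntegral_congr_fun measurableSet_Ioi fun t (ht : 0 < t) =>
          Real.norm_of_nonneg ?_
        have := prod_normSq_pow_nonneg z α
        positivity
    _ = N ! * (fubiniStudyWeight (N + 1) z • ∏ j, Complex.normSq (z j) ^ α j) := by
        rw [integral_const_mul, integral_pow_mul_exp_neg_one_add_sum_normSq, smul_eq_mul]
        ring

theorem integral_prod_normSq_pow_mul_fubiniStudyWeight (k : ℕ) (α : ι → ℕ) :
    ∫ z : ι → ℂ, (∏ j, Complex.normSq (z j) ^ α j) *
        fubiniStudyWeight (k + (∑ j, α j + Fintype.card ι) + 1) z =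
      π ^ Fintype.card ι * (∏ j, ((α j)! : ℝ)) * k ! /
        (k + (∑ j, α j + Fintype.card ι))! := by
  set d := ∑ j, α j + Fintype.card ι with hd
  set C : ℝ := π ^ Fintype.card ι * ∏ j, ((α j)! : ℝ) with hC
  rw [eq_div_iff (by positivity), mul_comm]
  calc ((k + d)! : ℝ) * ∫ z : ι → ℂ, (∏ j, Complex.normSq (z j) ^ α j) *
        fubiniStudyWeight (k + d + 1) z
      = ∫ z : ι → ℂ, ∫ t in Set.Ioi (0 : ℝ), (∏ j, Complex.normSq (z j) ^ α j) *
          (t ^ (k + d) * Real.exp (-((1 + ∑ j, Complex.normSq (z j)) * t))) := by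
        simp only [integral_const_mul, integral_pow_mul_exp_neg_one_add_sum_normSq,
          mul_left_comm _ ((k + d)! : ℝ)]
    _ = ∫ t in Set.Ioi (0 : ℝ), ∫ z : ι → ℂ, (∏ j, Complex.normSq (z j) ^ α j) *
          (t ^ (k + d) * Real.exp (-((1 + ∑ j, Complex.normSq (z j)) * t))) :=
        integral_integral_swap
          (integrable_prod_normSq_pow_mul_pow_mul_exp_neg (Nat.le_add_left d k))
    _ = ∫ t in Set.Ioi (0 : ℝ), C * (t ^ k * Real.exp (-(1 * t))) := by
        refine setIntegral_congr_fun measurableSet_Ioi fun t (ht : 0 < t) => ?_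
        have hsplit (z : ι → ℂ) : (∏ j, Complex.normSq (z j) ^ α j) *
            (t ^ (k + d) * Real.exp (-((1 + ∑ j, Complex.normSq (z j)) * t))) =
            t ^ (k + d) * Real.exp (-(1 * t)) * ((∏ j, Complex.normSq (z j) ^ α j) *
              Real.exp (-(t * ∑ j, Complex.normSq (z j)))) := by
          rw [add_mul, neg_add, Real.exp_add, mul_comm t]
          ring
        simp only [hsplit]
        rw [integral_const_mul, integral_prod_normSq_pow_mul_exp_neg α ht, ← hd, ← hC, pow_add]
        field_simp
    _ = C * k ! := by
        rw [integral_const_mul, integral_pow_mul_exp_neg_mul_Ioi k one_pos, one_pow, div_one]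

end DiagonalMoments

section TorusInvariance

variable {ι : Type*} [Fintype ι]

lemma integral_comp_circle_mul {E : Type*} [NormedAddCommGroup E] [NormedSpace ℝ E]
    (u : ι → Circle) (f : (ι → ℂ) → E) :
    ∫ z : ι → ℂ, f (fun j => u j * z j) = ∫ z, f z :=
  (volume_preserving_pi fun j => (rotation (u j)).measurePreserving).integral_comp
    (MeasurableEquiv.piCongrRight fun j =>
      (rotation (u j)).toHomeomorph.toMeasurableEquiv).measurableEmbedding f

lemma exists_circle_conj_pow_mul_pow_eq_neg_one {a b : ℕ} (hab : a ≠ b) :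
    ∃ u : Circle, conj (u : ℂ) ^ a * (u : ℂ) ^ b = -1 := by
  have hba : (b : ℂ) - a ≠ 0 := sub_ne_zero.mpr (Nat.cast_injective.ne hab.symm)
  refine ⟨Circle.exp (π / (b - a)), ?_⟩
  rw [Circle.coe_exp, ← Complex.exp_conj, ← Complex.exp_nat_mul, ← Complex.exp_nat_mul,
    ← Complex.exp_add, ← Complex.exp_pi_mul_I]
  congr 1
  simp only [map_mul, Complex.conj_ofReal, Complex.conj_I]
  push_cast
  field_simp
  ring

theorem integral_smul_conj_monomial_mul_monomial_eq_zero {w : (ι → ℂ) → ℝ}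
    (hw : ∀ (u : ι → Circle) z, w (fun j => u j * z j) = w z) {α β : ι → ℕ} (hαβ : α ≠ β) :
    ∫ z : ι → ℂ, w z • (conj (∏ j, z j ^ α j) * ∏ j, z j ^ β j) = 0 := by
  classical
  obtain ⟨i, hi⟩ := Function.ne_iff.mp hαβ
  obtain ⟨v, hv⟩ := exists_circle_conj_pow_mul_pow_eq_neg_one hi
  set u : ι → Circle := Pi.mulSingle i v
  have hu : conj (∏ j, (u j : ℂ) ^ α j) * ∏ j, (u j : ℂ) ^ β j = -1 := by
    rw [map_prod, ← Finset.prod_mul_distrib, Finset.prod_eq_single i _ (by simp)]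
    · simpa [u] using hv
    · intro j _ hj
      simp [u, hj]
  have hneg := integral_comp_circle_mul u
    fun z => w z • (conj (∏ j, z j ^ α j) * ∏ j, z j ^ β j)
  simp only [hw, mul_pow, Finset.prod_mul_distrib, map_mul, mul_mul_mul_comm, hu, neg_one_mul,
    smul_neg, integral_neg] at hneg
  exact self_eq_neg.mp hneg.symm

lemma fubiniStudyWeight_circle_mul (N : ℕ) (u : ι → Circle) (z : ι → ℂ) :
    fubiniStudyWeight N (fun j => u j * z j) = fubiniStudyWeight N z := by
  simp only [fubiniStudyWeight, Complex.normSq_mul, Circle.normSq_coe, one_mul]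

end TorusInvariance

section AffineMultinomial

variable {ι : Type*}

/-- The coefficient `m! / (α! (m - |α|)!)` of `X ^ α` in `(1 + ∑ j, X j) ^ m`; it is zero when
`|α| > m`. -/
noncomputable def affineMultinomial (m : ℕ) (α : ι →₀ ℕ) : ℕ :=
  m.choose α.degree * α.multinomial

lemma affineMultinomial_mul_factorials [Fintype ι] {m : ℕ} {α : ι →₀ ℕ} (hα : α.degree ≤ m) :
    affineMultinomial m α * ((∏ j, (α j)!) * (m - α.degree)!) = m ! := by
  have hmult := Nat.multinomial_spec Finset.univ α
  rw [Finsupp.multinomial_of_support_subset (Finset.subset_univ _), ← Finsupp.degree_eq_sum]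
    at hmult
  calc affineMultinomial m α * ((∏ j, (α j)!) * (m - α.degree)!)
      = m.choose α.degree * ((∏ j, (α j)!) * α.multinomial) * (m - α.degree)! := by
        rw [affineMultinomial]; ring
    _ = m ! := by rw [hmult, Nat.choose_mul_factorial_mul_factorial hα]

lemma affineMultinomial_ne_zero {m : ℕ} {α : ι →₀ ℕ} (hα : α.degree ≤ m) :
    affineMultinomial m α ≠ 0 :=
  mul_ne_zero (Nat.choose_pos hα).ne' (Nat.multinomial_pos _ _).ne'

lemma coeff_one_add_sum_smul_X_pow [Fintype ι] {R : Type*} [CommSemiring R] (c : ι → R) (m : ℕ)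
    (α : ι →₀ ℕ) :
    ((1 + ∑ j, c j • MvPolynomial.X j : MvPolynomial ι R) ^ m).coeff α =
      affineMultinomial m α * ∏ j, c j ^ α j := by
  have hterm (k : ℕ) : (((∑ j, c j • MvPolynomial.X j : MvPolynomial ι R) ^ k) *
      (m.choose k : MvPolynomial ι R)).coeff α =
      if α.degree = k then affineMultinomial m α * ∏ j, c j ^ α j else 0 := by
    rw [← map_natCast MvPolynomial.C, mul_comm, MvPolynomial.coeff_C_mul,
      MvPolynomial.coeff_linearCombination_X_pow_of_fintype, Finsupp.sum_fintype _ _ fun _ => rfl,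
      ← Finsupp.degree_eq_sum, Finsupp.prod_fintype _ _ fun _ => pow_zero _]
    split_ifs with hk
    · rw [affineMultinomial, hk, Nat.cast_mul, mul_assoc]
    · rw [mul_zero]
  rw [add_comm, add_pow, MvPolynomial.coeff_sum]
  simp only [one_pow, mul_one, hterm, Finset.sum_ite_eq, Finset.mem_range]
  split_ifs with hα
  · rfl
  · rw [affineMultinomial, Nat.choose_eq_zero_of_lt (by omega), zero_mul, Nat.cast_zero, zero_mul]

end AffineMultinomial

section PolynomialExpansion

variable {ι : Type*}

lemma degree_le_of_mem_support {R : Type*} [CommSemiring R] {P : MvPolynomial ι R} {k : ℕ}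
    (hP : P.totalDegree ≤ k) {α : ι →₀ ℕ} (hα : α ∈ P.support) : α.degree ≤ k :=
  (MvPolynomial.le_totalDegree hα).trans hP

lemma conj_eval_mul_eval [Fintype ι] (P Q : MvPolynomial ι ℂ) (z : ι → ℂ) :
    conj (MvPolynomial.eval z P) * MvPolynomial.eval z Q =
      ∑ α ∈ P.support, ∑ β ∈ Q.support, conj (P.coeff α) * Q.coeff β *
        (conj (∏ j, z j ^ α j) * ∏ j, z j ^ β j) := by
  rw [MvPolynomial.eval_eq', MvPolynomial.eval_eq', map_sum, Finset.sum_mul_sum]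
  simp only [map_mul, mul_mul_mul_comm]

end PolynomialExpansion

section WeightedInnerProduct

variable {n m : ℕ}

lemma wInner_eq_integral_fubiniStudyWeight_smul (f g : (Fin n → ℂ) → ℂ) :
    wInner n m f g =
      cconst n m * ∫ ν, fubiniStudyWeight (m + n + 1) ν • (conj (f ν) * g ν) := by
  simp only [wInner, fubiniStudyWeight, Complex.real_smul, Complex.ofReal_inv, mul_comm]

lemma conj_wInner (f g : (Fin n → ℂ) → ℂ) : conj (wInner n m f g) = wInner n m g f := by
  simp only [wInner_eq_integral_fubiniStudyWeight_smul, map_mul, Complex.conj_ofReal,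
    ← integral_conj, Complex.real_smul, Complex.conj_conj]
  simp only [mul_comm]

lemma cconst_eq (n m : ℕ) : cconst n m = (m + n)! / (π ^ n * m !) := by
  have h := integral_prod_normSq_pow_mul_fubiniStudyWeight m (0 : Fin n → ℕ)
  simp only [Pi.zero_apply, pow_zero, Finset.prod_const_one, one_mul, Finset.sum_const_zero,
    zero_add, Fintype.card_fin, Nat.factorial_zero, Nat.cast_one, mul_one] at h
  rw [← inv_div, ← h]
  rfl

lemma wInner_monomial_self {α : Fin n →₀ ℕ} (hα : α.degree ≤ m) :
    wInner n m (fun ν => ∏ j, ν j ^ α j) (fun ν => ∏ j, ν j ^ α j) =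
      (affineMultinomial m α : ℂ)⁻¹ := by
  have hint := integral_prod_normSq_pow_mul_fubiniStudyWeight (m - α.degree) α
  rw [Fintype.card_fin, ← Finsupp.degree_eq_sum, ← add_assoc, Nat.sub_add_cancel hα] at hint
  have hreal (ν : Fin n → ℂ) : fubiniStudyWeight (m + n + 1) ν •
      (conj (∏ j, ν j ^ α j) * ∏ j, ν j ^ α j) =
      (((∏ j, Complex.normSq (ν j) ^ α j) * fubiniStudyWeight (m + n + 1) ν : ℝ) : ℂ) := by
    rw [← Complex.normSq_eq_conj_mul_self, map_prod]
    simp only [map_pow, Complex.real_smul, Complex.ofReal_mul, mul_comm]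
  simp only [wInner_eq_integral_fubiniStudyWeight_smul, hreal, integral_complex_ofReal, hint,
    cconst_eq]
  rw [← Complex.ofReal_mul, ← Complex.ofReal_natCast, ← Complex.ofReal_inv]
  congr 1
  have hfac : (affineMultinomial m α * ((∏ j, ((α j)! : ℝ)) * (m - α.degree)!) : ℝ) = m ! :=
    mod_cast affineMultinomial_mul_factorials hα
  have hne : (affineMultinomial m α : ℝ) ≠ 0 := mod_cast affineMultinomial_ne_zero hα
  field_simp
  linear_combination hfac

lemma wInner_monomial_monomial_of_ne {α β : Fin n → ℕ} (hαβ : α ≠ β) :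
    wInner n m (fun ν => ∏ j, ν j ^ α j) (fun ν => ∏ j, ν j ^ β j) = 0 := by
  rw [wInner_eq_integral_fubiniStudyWeight_smul, integral_smul_conj_monomial_mul_monomial_eq_zero
    (fubiniStudyWeight_circle_mul _) hαβ, mul_zero]

lemma wInner_eval_eval_eq_sum_wInner_monomial {P Q : MvPolynomial (Fin n) ℂ}
    (hP : P.totalDegree ≤ m) (hQ : Q.totalDegree ≤ m) :
    wInner n m (fun ν => MvPolynomial.eval ν P) (fun ν => MvPolynomial.eval ν Q) =
      ∑ α ∈ P.support, ∑ β ∈ Q.support, conj (P.coeff α) * Q.coeff β *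
        wInner n m (fun ν => ∏ j, ν j ^ α j) (fun ν => ∏ j, ν j ^ β j) := by
  have hint : ∀ α ∈ P.support, ∀ β ∈ Q.support, Integrable fun ν : Fin n → ℂ =>
      fubiniStudyWeight (m + n + 1) ν • (conj (P.coeff α) * Q.coeff β *
        (conj (∏ j, ν j ^ α j) * ∏ j, ν j ^ β j)) := fun α hα β hβ => by
    simpa only [mul_smul_comm] using
      (integrable_fubiniStudyWeight_smul_conj_monomial_mul_monomial (k := m) (by simp)
      ((Finsupp.degree_eq_sum α).symm.trans_le (degree_le_of_mem_support hP hα))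
      ((Finsupp.degree_eq_sum β).symm.trans_le (degree_le_of_mem_support hQ hβ))).const_mul
        (conj (P.coeff α) * Q.coeff β)
  simp only [wInner_eq_integral_fubiniStudyWeight_smul, conj_eval_mul_eval, Finset.smul_sum]
  rw [integral_finsetSum _ fun α hα => integrable_finsetSum _ (hint α hα), Finset.mul_sum]
  refine Finset.sum_congr rfl fun α hα => ?_
  rw [integral_finsetSum _ (hint α hα), Finset.mul_sum]
  refine Finset.sum_congr rfl fun β _ => ?_
  rw [mul_left_comm, ← integral_const_mul (conj (P.coeff α) * Q.coeff β)]
  simp only [mul_smul_comm]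

theorem wInner_eval_eval {P Q : MvPolynomial (Fin n) ℂ}
    (hP : P.totalDegree ≤ m) (hQ : Q.totalDegree ≤ m) :
    wInner n m (fun ν => MvPolynomial.eval ν P) (fun ν => MvPolynomial.eval ν Q) =
      ∑ β ∈ Q.support, conj (P.coeff β) * Q.coeff β * (affineMultinomial m β : ℂ)⁻¹ := by
  rw [wInner_eval_eval_eq_sum_wInner_monomial hP hQ, Finset.sum_comm]
  refine Finset.sum_congr rfl fun β hβ => ?_
  rw [← wInner_monomial_self (degree_le_of_mem_support hQ hβ)]
  refine Finset.sum_eq_single β (fun α _ hαβ => ?_) fun hβP => ?_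
  · rw [wInner_monomial_monomial_of_ne (DFunLike.coe_injective.ne hαβ), mul_zero]
  · rw [MvPolynomial.notMem_support_iff.mp hβP, map_zero, zero_mul, zero_mul]

end WeightedInnerProduct

section CoherentStates

variable {n m : ℕ}

/-- The coherent state `ψ_μ` as a polynomial in its second argument. -/
noncomputable def coherentPolynomial (m : ℕ) (μ : Fin n → ℂ) : MvPolynomial (Fin n) ℂ :=
  (1 + ∑ j, conj (μ j) • MvPolynomial.X j) ^ m

lemma eval_coherentPolynomial (μ ν : Fin n → ℂ) :
    MvPolynomial.eval ν (coherentPolynomial m μ) = psiCS n m μ ν := by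
  simp [coherentPolynomial, psiCS, MvPolynomial.smul_eval]

lemma totalDegree_coherentPolynomial_le (μ : Fin n → ℂ) :
    (coherentPolynomial m μ).totalDegree ≤ m := by
  have hlin : (∑ j, conj (μ j) • MvPolynomial.X j : MvPolynomial (Fin n) ℂ).totalDegree ≤ 1 :=
    MvPolynomial.totalDegree_finsetSum_le fun j _ =>
      (MvPolynomial.totalDegree_smul_le _ _).trans (MvPolynomial.totalDegree_X j).le
  calc (coherentPolynomial m μ).totalDegree
      ≤ m * (1 + ∑ j, conj (μ j) • MvPolynomial.X j : MvPolynomial (Fin n) ℂ).totalDegree :=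
        MvPolynomial.totalDegree_pow _ _
    _ ≤ m * 1 := by
        gcongr
        exact (MvPolynomial.totalDegree_add _ _).trans (max_le (by simp) hlin)
    _ = m := mul_one m

theorem wInner_psiCS_eval {P : MvPolynomial (Fin n) ℂ} (hP : P.totalDegree ≤ m)
    (μ : Fin n → ℂ) :
    wInner n m (psiCS n m μ) (fun ν => MvPolynomial.eval ν P) = MvPolynomial.eval μ P := by
  simp only [← funext (eval_coherentPolynomial (m := m) μ)]
  rw [wInner_eval_eval (totalDegree_coherentPolynomial_le μ) hP, MvPolynomial.eval_eq']
  refine Finset.sum_congr rfl fun α hα => ?_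
  have hne : (affineMultinomial m α : ℂ) ≠ 0 :=
    mod_cast affineMultinomial_ne_zero (degree_le_of_mem_support hP hα)
  have hcoeff : conj ((coherentPolynomial m μ).coeff α) =
      affineMultinomial m α * ∏ j, μ j ^ α j := by
    simp only [coherentPolynomial, coeff_one_add_sum_smul_X_pow, map_mul, map_natCast, map_prod,
      map_pow, Complex.conj_conj]
  rw [hcoeff]
  field_simp

theorem integral_wInner_psiCS_mul_wInner_psiCS {P Q : MvPolynomial (Fin n) ℂ}
    (hP : P.totalDegree ≤ m) (hQ : Q.totalDegree ≤ m) :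
    (cconst n m : ℂ) * ∫ μ : Fin n → ℂ,
        wInner n m (fun ν => MvPolynomial.eval ν P) (psiCS n m μ) *
          wInner n m (psiCS n m μ) (fun ν => MvPolynomial.eval ν Q) *
          ((((1 + ∑ j, Complex.normSq (μ j)) ^ (m + n + 1) : ℝ) : ℂ))⁻¹ =
      wInner n m (fun ν => MvPolynomial.eval ν P) (fun ν => MvPolynomial.eval ν Q) := by
  have hleft (μ : Fin n → ℂ) : wInner n m (fun ν => MvPolynomial.eval ν P) (psiCS n m μ) =
      conj (MvPolynomial.eval μ P) := by
    rw [← conj_wInner, wInner_psiCS_eval hP]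
  simp only [hleft, wInner_psiCS_eval hQ]
  rfl

end CoherentStates

/-- resolution of the identity.  For all polynomials `Ψ₁, Ψ₂` of
total degree at most `m`,
`c(m) ∫ ⟨Ψ₁,ψ_μ⟩ₘ ⟨ψ_μ,Ψ₂⟩ₘ (1+‖μ‖²)^{-(m+n+1)} dλ(μ) = ⟨Ψ₁,Ψ₂⟩ₘ`;
in particular
`c(m) ∫ ⟨ψ_ν,ψ_μ⟩ₘ ⟨ψ_μ,ψ_ν⟩ₘ (1+‖μ‖²)^{-(m+n+1)} dλ(μ) = ⟨ψ_ν,ψ_ν⟩ₘ`. -/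
theorem stmt_5 (n m : ℕ) (hn : 1 ≤ n) (P₁ P₂ : MvPolynomial (Fin n) ℂ)
    (hP₁ : P₁.totalDegree ≤ m) (hP₂ : P₂.totalDegree ≤ m) :
    (((cconst n m : ℝ) : ℂ) *
        ∫ μ : Fin n → ℂ,
          wInner n m (fun ν => MvPolynomial.eval ν P₁) (psiCS n m μ) *
            wInner n m (psiCS n m μ) (fun ν => MvPolynomial.eval ν P₂) *
            ((((1 + ∑ j, Complex.normSq (μ j)) ^ (m + n + 1) : ℝ) : ℂ))⁻¹
      = wInner n m (fun ν => MvPolynomial.eval ν P₁) (fun ν => MvPolynomial.eval ν P₂)) ∧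
    ∀ ν : Fin n → ℂ,
      ((cconst n m : ℝ) : ℂ) *
        ∫ μ : Fin n → ℂ,
          wInner n m (psiCS n m ν) (psiCS n m μ) *
            wInner n m (psiCS n m μ) (psiCS n m ν) *
            ((((1 + ∑ j, Complex.normSq (μ j)) ^ (m + n + 1) : ℝ) : ℂ))⁻¹
      = wInner n m (psiCS n m ν) (psiCS n m ν) := by
  refine ⟨integral_wInner_psiCS_mul_wInner_psiCS hP₁ hP₂, fun ν => ?_⟩
  simpa only [eval_coherentPolynomial] using integral_wInner_psiCS_mul_wInner_psiCS
    (totalDegree_coherentPolynomial_le (m := m) ν) (totalDegree_coherentPolynomial_le ν)
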